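/- In any 3-letter representation of a graph G by a word w over the alphabet {a,b,c} with the decoder {(a,b),(b,c),(c,a)} in which the first letter of w is b and the last letter is c, the following hold: (1) no vertex of G is adjacent to both the vertex of the first letter and the vertex of the last letter; (2) every vertex non-adjacent to both of them is labelled a; (3) every vertex non-adjacent to the first and adjacent to the last is labelled b; (4) every vertex adjacent to the first and non-adjacent to the last is labelled c. -/

import Mathlib

/-- The letter graph of a word `w` over an alphabet `α` with decoder `P`:
vertices are positions `1,…,n`, and `i` is adjacent to `j > i` iff `(wᵢ, wⱼ) ∈ P`. -/
def letterGraph {n : ℕ} {α : Type*} (P : α → α → Prop) (w : Fin n → α) :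
    SimpleGraph (Fin n) where
  Adj i j := (i < j ∧ P (w i) (w j)) ∨ (j < i ∧ P (w j) (w i))
  symm := by
    constructor
    intro i j h
    rcases h with h | h
    · exact Or.inr h
    · exact Or.inl h
  loopless := by
    constructor
    intro i h
    rcases h with h | h <;> exact lt_irrefl i h.1

/-- The cyclic decoder `{(a,b),(b,c),(c,a)}` over the alphabet `{a,b,c} = Fin 3`
(`a = 0`, `b = 1`, `c = 2`). -/
def cyclicDecoder : Fin 3 → Fin 3 → Prop := fun x y =>
  (x = 0 ∧ y = 1) ∨ (x = 1 ∧ y = 2) ∨ (x = 2 ∧ y = 0)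

/-- `G` is a 3-letter graph with the decoder `{(a,b),(b,c),(c,a)}`. -/
def IsCyclic3Letter {V : Type} (G : SimpleGraph V) : Prop :=
  ∃ (n : ℕ) (w : Fin n → Fin 3), Nonempty (G ≃g letterGraph cyclicDecoder w)

/-!
The first letter of a word precedes every other, so its neighbours are the positions whose letter
it may precede; dually for the last. The cyclic decoder relates each letter to its successor
modulo 3 and to nothing else, so the two neighbourhoods are exactly the positions of one letter
each. When the last letter is the successor of the first, these two letters are distinct, and the
vertices outside both neighbourhoods carry the third one.
-/

section Endpoints

variable {α : Type*} {P : α → α → Prop} {m : ℕ} (w : Fin (m + 1) → α) (i : Fin (m + 1))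

theorem letterGraph_adj_zero_iff : (letterGraph P w).Adj i 0 ↔ i ≠ 0 ∧ P (w 0) (w i) := by
  simp [letterGraph, Fin.pos_iff_ne_zero]

theorem letterGraph_adj_last_iff :
    (letterGraph P w).Adj i (Fin.last m) ↔ i ≠ Fin.last m ∧ P (w i) (w (Fin.last m)) := by
  simp [letterGraph, Fin.lt_last_iff_ne_last, (Fin.le_last i).not_gt]

end Endpoints

section Cyclic

theorem cyclicDecoder_iff (x y : Fin 3) : cyclicDecoder x y ↔ y = x + 1 := by
  unfold cyclicDecoder
  decide +revert

variable {m : ℕ} (w : Fin (m + 1) → Fin 3) (i : Fin (m + 1))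

theorem letterGraph_cyclicDecoder_adj_zero_iff :
    (letterGraph cyclicDecoder w).Adj i 0 ↔ w i = w 0 + 1 := by
  rw [letterGraph_adj_zero_iff, cyclicDecoder_iff, and_iff_right_iff_imp]
  rintro h rfl
  simp at h

theorem letterGraph_cyclicDecoder_adj_last_iff :
    (letterGraph cyclicDecoder w).Adj i (Fin.last m) ↔ w (Fin.last m) = w i + 1 := by
  rw [letterGraph_adj_last_iff, cyclicDecoder_iff, and_iff_right_iff_imp]
  rintro h rfl
  simp at h

theorem first_b_last_c_labels_general (h : w (Fin.last m) = w 0 + 1) :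
    (∀ i, ¬ ((letterGraph cyclicDecoder w).Adj i 0 ∧
      (letterGraph cyclicDecoder w).Adj i (Fin.last m))) ∧
    (∀ i, ¬ (letterGraph cyclicDecoder w).Adj i 0 →
      ¬ (letterGraph cyclicDecoder w).Adj i (Fin.last m) → w i = w 0 + 2) ∧
    (∀ i, ¬ (letterGraph cyclicDecoder w).Adj i 0 →
      (letterGraph cyclicDecoder w).Adj i (Fin.last m) → w i = w 0) ∧
    (∀ i, (letterGraph cyclicDecoder w).Adj i 0 →
      ¬ (letterGraph cyclicDecoder w).Adj i (Fin.last m) → w i = w 0 + 1) := by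
  have adj_first i : (letterGraph cyclicDecoder w).Adj i 0 ↔ w i = w 0 + 1 :=
    letterGraph_cyclicDecoder_adj_zero_iff w i
  have adj_last i : (letterGraph cyclicDecoder w).Adj i (Fin.last m) ↔ w i = w 0 := by
    rw [letterGraph_cyclicDecoder_adj_last_iff, h, add_left_inj, eq_comm]
  have third_letter : ∀ x y : Fin 3, x ≠ y + 1 → x ≠ y → x = y + 2 := by decide
  simp only [adj_first, adj_last]
  exact ⟨fun i ⟨hsucc, heq⟩ => by simp [heq] at hsucc, fun i => third_letter (w i) (w 0),
    fun _ _ heq => heq, fun _ hsucc _ => hsucc⟩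

end Cyclic

/-- In any representation of a graph as a letter graph over `{a,b,c} = Fin 3` with the
decoder `{(a,b),(b,c),(c,a)}` by a word starting with `b` and ending with `c`:
(1) no vertex is adjacent to both the first and the last vertex; (2) every vertex
non-adjacent to both is labelled `a`; (3) every vertex non-adjacent to the first and
adjacent to the last is labelled `b`; (4) every vertex adjacent to the first and
non-adjacent to the last is labelled `c`. -/
theorem first_b_last_c_labels (m : ℕ) (w : Fin (m + 1) → Fin 3)
    (hfirst : w 0 = 1) (hlast : w (Fin.last m) = 2) :
    (∀ i : Fin (m + 1),
      ¬ ((letterGraph cyclicDecoder w).Adj i 0 ∧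
         (letterGraph cyclicDecoder w).Adj i (Fin.last m))) ∧
    (∀ i : Fin (m + 1),
      ¬ (letterGraph cyclicDecoder w).Adj i 0 →
      ¬ (letterGraph cyclicDecoder w).Adj i (Fin.last m) → w i = 0) ∧
    (∀ i : Fin (m + 1),
      ¬ (letterGraph cyclicDecoder w).Adj i 0 →
      (letterGraph cyclicDecoder w).Adj i (Fin.last m) → w i = 1) ∧
    (∀ i : Fin (m + 1),
      (letterGraph cyclicDecoder w).Adj i 0 →
      ¬ (letterGraph cyclicDecoder w).Adj i (Fin.last m) → w i = 2) := by
  simpa [hfirst] using first_b_last_c_labels_general w (by rw [hfirst, hlast]; rfl)
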